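/- Let U be a unitary 2×2 complex matrix. There exist a real number α and a unitary 2×2 matrix A such that U·X = e^{iα}·(A·X·Aᴴ) if and only if there exist real numbers α', β, γ such that U = e^{iα'}·Rz(β)·Ry(γ)·Rz(β). (Equivalently: the controlled-(UX) gate can be realized with a single CNOT gate and two single-qubit gates that are conjugate transposes of each other, up to a phase on the control, precisely for such U.) -/

import Mathlib

open Matrix Complex

noncomputable section

/-- Rz(θ) := diag(e^{-iθ/2}, e^{iθ/2}) -/
def Rz (θ : ℝ) : Matrix (Fin 2) (Fin 2) ℂ :=
  !![Complex.exp (-((θ : ℂ)/2) * Complex.I), 0; 0, Complex.exp (((θ : ℂ)/2) * Complex.I)]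

/-- Ry(θ) := [[cos(θ/2), -sin(θ/2)],[sin(θ/2), cos(θ/2)]] -/
def Ry (θ : ℝ) : Matrix (Fin 2) (Fin 2) ℂ :=
  !![(Real.cos (θ/2) : ℂ), -(Real.sin (θ/2) : ℂ);
     (Real.sin (θ/2) : ℂ),  (Real.cos (θ/2) : ℂ)]

/-- Pauli X -/
def X : Matrix (Fin 2) (Fin 2) ℂ := !![0, 1; 1, 0]

/-- A matrix is unitary if U·Uᴴ = Uᴴ·U = I. -/
def IsUnitary (U : Matrix (Fin 2) (Fin 2) ℂ) : Prop := U * Uᴴ = 1 ∧ Uᴴ * U = 1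

/-!
Both sides say that, up to the common phase, `U * X` is a traceless Hermitian unitary: such matrices
form a single unitary conjugacy class, that of `X`. Written as `!![r, conj z; z, -r]` with
`r ^ 2 + ‖z‖ ^ 2 = 1`, such a matrix times `X` is `Rz β * Ry γ * Rz β` with `β = arg z` and
`sin (γ / 2) = -r`. Conversely `X` inverts both kinds of rotation, so
`Rz β * Ry γ * Rz β * X` is the conjugate of `X` by `Rz β * Ry (γ / 2)`.
-/

theorem isUnitary_iff_mem_unitaryGroup {A : Matrix (Fin 2) (Fin 2) ℂ} :
    IsUnitary A ↔ A ∈ unitaryGroup (Fin 2) ℂ := by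
  rw [IsUnitary, Unitary.mem_iff, and_comm, star_eq_conjTranspose]

theorem isUnitary_of_mul_conjTranspose_eq_one {A : Matrix (Fin 2) (Fin 2) ℂ} (hA : A * Aᴴ = 1) :
    IsUnitary A :=
  ⟨hA, mul_eq_one_comm.1 hA⟩

namespace IsUnitary

variable {A B : Matrix (Fin 2) (Fin 2) ℂ}

theorem mul (hA : IsUnitary A) (hB : IsUnitary B) : IsUnitary (A * B) := by
  rw [isUnitary_iff_mem_unitaryGroup] at hA hB ⊢
  exact mul_mem hA hB

theorem conjTranspose (hA : IsUnitary A) : IsUnitary Aᴴ := by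
  rw [IsUnitary, conjTranspose_conjTranspose]
  exact hA.symm

theorem trace_mul_mul_conjTranspose (hA : IsUnitary A) : (A * B * Aᴴ).trace = B.trace := by
  rw [trace_mul_cycle, hA.2, Matrix.one_mul]

end IsUnitary

theorem X_mul_X : X * X = 1 := by
  simp [X, one_fin_two]

theorem isHermitian_X : X.IsHermitian := by
  ext i j
  fin_cases i <;> fin_cases j <;> simp [X]

theorem trace_X : X.trace = 0 := by
  simp [X]

theorem isUnitary_X : IsUnitary X :=
  isUnitary_of_mul_conjTranspose_eq_one (by rw [isHermitian_X.eq, X_mul_X])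

theorem Rz_zero : Rz 0 = 1 := by
  simp [Rz, one_fin_two]

theorem Rz_add (θ φ : ℝ) : Rz (θ + φ) = Rz θ * Rz φ := by
  simp only [Rz, mul_fin_two, ← Complex.exp_add]
  push_cast
  ring_nf

theorem conjTranspose_Rz (θ : ℝ) : (Rz θ)ᴴ = Rz (-θ) := by
  ext i j
  fin_cases i <;> fin_cases j <;> simp [Rz, ← Complex.exp_conj, map_ofNat, neg_div]

theorem isUnitary_Rz (θ : ℝ) : IsUnitary (Rz θ) :=
  isUnitary_of_mul_conjTranspose_eq_one
    (by rw [conjTranspose_Rz, ← Rz_add, add_neg_cancel, Rz_zero])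

theorem X_mul_conjTranspose_Rz (θ : ℝ) : X * (Rz θ)ᴴ = Rz θ * X := by
  rw [conjTranspose_Rz]
  simp [Rz, X, neg_div]

theorem Ry_zero : Ry 0 = 1 := by
  simp [Ry, one_fin_two]

theorem Ry_add (θ φ : ℝ) : Ry (θ + φ) = Ry θ * Ry φ := by
  simp only [Ry, mul_fin_two, add_div, Real.cos_add, Real.sin_add]
  push_cast
  ring_nf

theorem conjTranspose_Ry (θ : ℝ) : (Ry θ)ᴴ = Ry (-θ) := by
  ext i j
  fin_cases i <;> fin_cases j <;> simp [Ry, -Complex.ofReal_cos, -Complex.ofReal_sin, neg_div]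

theorem isUnitary_Ry (θ : ℝ) : IsUnitary (Ry θ) :=
  isUnitary_of_mul_conjTranspose_eq_one
    (by rw [conjTranspose_Ry, ← Ry_add, add_neg_cancel, Ry_zero])

theorem X_mul_conjTranspose_Ry (θ : ℝ) : X * (Ry θ)ᴴ = Ry θ * X := by
  rw [conjTranspose_Ry]
  simp [Ry, X, neg_div]

theorem Ry_half_mul_X_mul_conjTranspose (γ : ℝ) :
    Ry (γ / 2) * X * (Ry (γ / 2))ᴴ = Ry γ * X := by
  rw [Matrix.mul_assoc, X_mul_conjTranspose_Ry, ← Matrix.mul_assoc, ← Ry_add, add_halves]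

theorem Rz_mul_Ry_half_mul_X_mul_conjTranspose (β γ : ℝ) :
    Rz β * Ry (γ / 2) * X * (Rz β * Ry (γ / 2))ᴴ = Rz β * Ry γ * Rz β * X :=
  calc
    Rz β * Ry (γ / 2) * X * (Rz β * Ry (γ / 2))ᴴ
        = Rz β * (Ry (γ / 2) * X * (Ry (γ / 2))ᴴ) * (Rz β)ᴴ := by
      simp only [conjTranspose_mul, Matrix.mul_assoc]
    _ = Rz β * Ry γ * (X * (Rz β)ᴴ) := by
      rw [Ry_half_mul_X_mul_conjTranspose]
      simp only [Matrix.mul_assoc]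
    _ = Rz β * Ry γ * Rz β * X := by
      rw [X_mul_conjTranspose_Rz, ← Matrix.mul_assoc]

theorem Rz_mul_Ry_mul_Rz (β γ : ℝ) :
    Rz β * Ry γ * Rz β =
      !![Real.cos (γ / 2) * Complex.exp (-(β * I)), -Real.sin (γ / 2);
         Real.sin (γ / 2), Real.cos (γ / 2) * Complex.exp (β * I)] := by
  have exp_half_mul_self (w : ℂ) : Complex.exp (w / 2) * Complex.exp (w / 2) = Complex.exp w := by
    rw [← Complex.exp_add, add_halves]
  have hpos : Complex.exp (β / 2 * I) * Complex.exp (β / 2 * I) = Complex.exp (β * I) := by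
    rw [div_mul_eq_mul_div, exp_half_mul_self]
  have hneg : Complex.exp (-(β / 2 * I)) * Complex.exp (-(β / 2 * I)) = Complex.exp (-(β * I)) := by
    rw [div_mul_eq_mul_div, ← neg_div, exp_half_mul_self]
  have hcancel : Complex.exp (-(β / 2 * I)) * Complex.exp (β / 2 * I) = 1 := by
    rw [← Complex.exp_add, neg_add_cancel, Complex.exp_zero]
  simp only [Rz, Ry, mul_fin_two, neg_mul, zero_mul, mul_zero, add_zero, zero_add]
  congrm !![?_, ?_; ?_, ?_]
  · linear_combination (Real.cos (γ / 2) : ℂ) * hneg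
  · linear_combination -(Real.sin (γ / 2) : ℂ) * hcancel
  · linear_combination (Real.sin (γ / 2) : ℂ) * hcancel
  · linear_combination (Real.cos (γ / 2) : ℂ) * hpos

theorem exists_Rz_mul_Ry_mul_Rz_eq {s : ℝ} {z : ℂ} (h : s ^ 2 + ‖z‖ ^ 2 = 1) :
    ∃ β γ : ℝ, Rz β * Ry γ * Rz β = !![star z, -(s : ℂ); (s : ℂ), z] := by
  have hsin : Real.sin (Real.arcsin s) = s :=
    Real.sin_arcsin (by nlinarith [sq_nonneg ‖z‖]) (by nlinarith [sq_nonneg ‖z‖])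
  have hcos : Real.cos (Real.arcsin s) = ‖z‖ := by
    rw [Real.cos_arcsin, ← h, add_sub_cancel_left, Real.sqrt_sq (norm_nonneg z)]
  have hz : ‖z‖ * Complex.exp (z.arg * I) = z := norm_mul_exp_arg_mul_I z
  have hz_star : ‖z‖ * Complex.exp (-(z.arg * I)) = star z := by
    conv_rhs => rw [← hz]
    rw [Complex.star_def, map_mul, ← Complex.exp_conj, map_mul, conj_ofReal, conj_ofReal, conj_I,
      mul_neg]
  refine ⟨z.arg, 2 * Real.arcsin s, ?_⟩
  rw [Rz_mul_Ry_mul_Rz, mul_div_cancel_left₀ _ two_ne_zero, hsin, hcos, hz, hz_star]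

theorem exists_eq_of_isHermitian_of_trace_eq_zero {𝕜 : Type*} [RCLike 𝕜]
    {W : Matrix (Fin 2) (Fin 2) 𝕜} (hW : W.IsHermitian) (htr : W.trace = 0) :
    ∃ (r : ℝ) (z : 𝕜), W = !![(r : 𝕜), star z; z, -(r : 𝕜)] := by
  refine ⟨RCLike.re (W 0 0), W 1 0, ?_⟩
  have h11 : W 1 1 = -W 0 0 := by
    rw [trace_fin_two] at htr
    exact eq_neg_of_add_eq_zero_right htr
  rw [hW.coe_re_apply_self, hW.apply, ← h11]
  exact eta_fin_two W

theorem exists_mul_X_eq_Rz_mul_Ry_mul_Rz {W : Matrix (Fin 2) (Fin 2) ℂ} (hW : W.IsHermitian)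
    (htr : W.trace = 0) (hunit : IsUnitary W) :
    ∃ β γ : ℝ, W * X = Rz β * Ry γ * Rz β := by
  have hsq : W * W = 1 := by simpa only [hW.eq] using hunit.1
  obtain ⟨r, z, rfl⟩ := exists_eq_of_isHermitian_of_trace_eq_zero hW htr
  have hnorm : (-r) ^ 2 + ‖z‖ ^ 2 = 1 := by
    have h00 : (r : ℂ) * r + star z * z = 1 := by simpa using congrFun₂ hsq 0 0
    rw [Complex.star_def, Complex.conj_mul'] at h00
    rw [neg_sq, sq r]
    exact_mod_cast h00
  obtain ⟨β, γ, h⟩ := exists_Rz_mul_Ry_mul_Rz_eq hnorm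
  exact ⟨β, γ, by simp [h, X]⟩

theorem controlled_UX_single_CNOT_iff_general (U : Matrix (Fin 2) (Fin 2) ℂ) (c : ℂ) :
    (∃ A : Matrix (Fin 2) (Fin 2) ℂ, IsUnitary A ∧ U * X = c • (A * X * Aᴴ)) ↔
      ∃ β γ : ℝ, U = c • (Rz β * Ry γ * Rz β) := by
  constructor
  · rintro ⟨A, hA, h⟩
    obtain ⟨β, γ, hW⟩ := exists_mul_X_eq_Rz_mul_Ry_mul_Rz
      (isHermitian_mul_mul_conjTranspose A isHermitian_X)
      (hA.trace_mul_mul_conjTranspose.trans trace_X)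
      ((hA.mul isUnitary_X).mul hA.conjTranspose)
    refine ⟨β, γ, ?_⟩
    calc
      U = U * X * X := by rw [Matrix.mul_assoc, X_mul_X, Matrix.mul_one]
      _ = c • (A * X * Aᴴ * X) := by rw [h, Matrix.smul_mul]
      _ = c • (Rz β * Ry γ * Rz β) := by rw [hW]
  · rintro ⟨β, γ, rfl⟩
    exact ⟨Rz β * Ry (γ / 2), (isUnitary_Rz β).mul (isUnitary_Ry (γ / 2)),
      by rw [Rz_mul_Ry_half_mul_X_mul_conjTranspose, Matrix.smul_mul]⟩

theorem controlled_UX_single_CNOT_iff (U : Matrix (Fin 2) (Fin 2) ℂ) (hU : IsUnitary U) :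
    (∃ (α : ℝ) (A : Matrix (Fin 2) (Fin 2) ℂ), IsUnitary A ∧
        U * X = Complex.exp ((α : ℂ) * Complex.I) • (A * X * Aᴴ)) ↔
    (∃ α' β γ : ℝ, U = Complex.exp ((α' : ℂ) * Complex.I) • (Rz β * Ry γ * Rz β)) :=
  exists_congr fun α ↦ controlled_UX_single_CNOT_iff_general U (Complex.exp ((α : ℂ) * Complex.I))

end
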